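/- arXiv:1709.00143 — 3 statements merged into one kernel-verified Lean document; each statement's English description precedes it below -/
import Mathlib

section
/- Let X be a nonempty compact topological space and let u : ℝ × X → ℝ be continuous. Assume that for every x ∈ X the function t ↦ u(t,x) is differentiable, and that the partial derivative ∂ₜu : ℝ × X → ℝ is continuous. Define φ(t) = max_{x ∈ X} u(t,x). Then for every t ∈ ℝ, the upper right Dini derivative of φ at t satisfies D⁺φ(t) ≤ max { ∂ₜu(t,x) : x ∈ X and u(t,x) = φ(t) }. -/
/-!
For every `C` exceeding the maximum of `∂ₜu(t, ·)` over the maximizers of `u(t, ·)`, the bound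
`u(s, y) ≤ φ(t) + (s - t) C` holds for `(s, y)` close to any given `(t, x)` with `s > t`: if
`∂ₜu(t, x) < C` this is the mean value inequality (`u(t, y) ≤ φ(t)`), and otherwise `x` is not a
maximizer, so that `u(t, x) < φ(t)` and continuity suffices. Compactness of `X` makes the
neighbourhood of `t` uniform in `x`, and taking the supremum over `x` bounds the difference
quotients of `φ` by `C`.
-/

open Filter Topology

/-- The local estimate at a point `x` where `∂ₜu(t, x) < C` or `u(t, x)` is below the maximum `m`. -/
lemma eventually_le_add_mul {X : Type*} [TopologicalSpace X]
    {u du : ℝ × X → ℝ} (hu : Continuous u) (hdu : Continuous du)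
    (hderiv : ∀ x : X, ∀ t : ℝ, HasDerivAt (fun s : ℝ => u (s, x)) (du (t, x)) t)
    {t m C : ℝ} (hm : ∀ y, u (t, y) ≤ m) (x : X) (hx : du (t, x) < C ∨ u (t, x) < m) :
    ∀ᶠ p : ℝ × X in 𝓝 (t, x), t < p.1 → u p ≤ m + (p.1 - t) * C := by
  rcases hx with hx | hx
  · have h1 : ∀ᶠ p : ℝ × X in 𝓝 t ×ˢ 𝓝 x, du p < C := by
      rw [← nhds_prod_eq]
      exact hdu.continuousAt.eventually_lt continuousAt_const hx
    obtain ⟨pa, ha, pb, hb, hab⟩ := eventually_prod_iff.1 h1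
    obtain ⟨δ, hδ, hball⟩ := Metric.eventually_nhds_iff_ball.1 ha
    rw [nhds_prod_eq]
    have hball_nhds : ∀ᶠ s in 𝓝 t, s ∈ Metric.ball t δ := Metric.ball_mem_nhds t hδ
    filter_upwards [hball_nhds.prod_mk hb]
    rintro ⟨s, y⟩ ⟨hs, hy⟩ hts
    have hsub : ∀ r ∈ Set.Icc t s, r ∈ Metric.ball t δ := fun r hr =>
      (convex_ball t δ).ordConnected.out (Metric.mem_ball_self hδ) hs hr
    have key := (convex_Icc t s).image_sub_le_mul_sub_of_deriv_le
      (f := fun r => u (r, y)) (by fun_prop)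
      (fun r _ => (hderiv y r).differentiableAt.differentiableWithinAt) (C := C)
      (fun r hr => by
        rw [(hderiv y r).deriv]
        exact (hab (hball r (hsub r (interior_subset hr))) hy).le)
      t (Set.left_mem_Icc.2 hts.le) s (Set.right_mem_Icc.2 hts.le) hts.le
    have := hm y
    simp only at key ⊢
    linarith
  · have : ∀ᶠ p : ℝ × X in 𝓝 (t, x), u p < m + (p.1 - t) * C :=
      hu.continuousAt.eventually_lt (by fun_prop) (by simpa using hx)
    exact this.mono fun p hp _ => hp.le

/-- Hamilton's trick (derivative of the maximum): if `u : ℝ × X → ℝ` is continuous on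
`ℝ × X` with `X` compact nonempty, each `t ↦ u (t, x)` is differentiable with continuous
partial derivative `du`, and `φ t = max_{x ∈ X} u (t, x)`, then the upper right Dini
derivative of `φ` at any `t` is at most the maximum of `du (t, ·)` over the maximizers. -/
theorem dini_deriv_max_le {X : Type*} [TopologicalSpace X] [CompactSpace X] [Nonempty X]
    (u du : ℝ × X → ℝ) (hu : Continuous u) (hdu : Continuous du)
    (hderiv : ∀ x : X, ∀ t : ℝ, HasDerivAt (fun s : ℝ => u (s, x)) (du (t, x)) t)
    (φ : ℝ → ℝ) (hφ : ∀ t, φ t = sSup (Set.range fun x : X => u (t, x))) (t : ℝ) :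
    Filter.limsup (fun h : ℝ => (φ (t + h) - φ t) / h) (𝓝[>] (0 : ℝ))
      ≤ sSup ((fun x : X => du (t, x)) '' {x : X | u (t, x) = φ t}) := by
  have hcpt : ∀ s, IsCompact (Set.range fun x : X => u (s, x)) := fun s =>
    isCompact_range (by fun_prop)
  have hle : ∀ s x, u (s, x) ≤ φ s := fun s x => by
    rw [hφ]
    exact le_csSup (hcpt s).bddAbove ⟨x, rfl⟩
  have hbdd : BddAbove ((fun x : X => du (t, x)) '' {x : X | u (t, x) = φ t}) :=
    (isCompact_range (f := fun x : X => du (t, x)) (by fun_prop)).bddAbove.mono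
      (Set.image_subset_range _ _)
  have hpos : ∀ᶠ h : ℝ in 𝓝[>] 0, 0 < h := self_mem_nhdsWithin
  -- A real `limsup` is meaningful only if the quotients do not tend to `-∞`; they are bounded
  -- below by the difference quotients of `u(·, x₀)` at a maximizer `x₀`.
  have hcob : IsCoboundedUnder (· ≤ ·) (𝓝[>] (0 : ℝ)) fun h : ℝ => (φ (t + h) - φ t) / h := by
    obtain ⟨x₀, hx₀⟩ : φ t ∈ Set.range fun x : X => u (t, x) := by
      rw [hφ]
      exact (hcpt t).sSup_mem (Set.range_nonempty _)
    have hslope := (hderiv x₀ t).tendsto_slope_zero_right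
    refine IsBoundedUnder.isCoboundedUnder_le ⟨du (t, x₀) - 1, ?_⟩
    rw [eventually_map]
    filter_upwards [hslope.eventually_const_lt (sub_one_lt _), hpos] with h h1 h2
    refine h1.le.trans ?_
    rw [smul_eq_mul, inv_mul_eq_div]
    have := hle (t + h) x₀
    simp only at hx₀
    gcongr
    exact hx₀.ge
  refine le_of_forall_gt_imp_ge_of_dense fun C hC => limsup_le_of_le hcob ?_
  have hloc : ∀ x ∈ (Set.univ : Set X), ∀ᶠ p : ℝ × X in 𝓝 (t, x),
      t < p.1 → u p ≤ φ t + (p.1 - t) * C := fun x _ => by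
    refine eventually_le_add_mul hu hdu hderiv (hle t) x ?_
    rcases (hle t x).lt_or_eq with hx | hx
    · exact Or.inr hx
    · exact Or.inl ((le_csSup hbdd ⟨x, hx, rfl⟩).trans_lt hC)
  have hunif := isCompact_univ.eventually_forall_of_forall_eventually
    (P := fun s (x : X) => t < s → u (s, x) ≤ φ t + (s - t) * C) hloc
  have hshift : Tendsto (fun h : ℝ => t + h) (𝓝[>] 0) (𝓝 t) := by
    have : Tendsto (fun h : ℝ => t + h) (𝓝 0) (𝓝 (t + 0)) :=
      (continuous_const.add continuous_id).tendsto 0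
    rw [add_zero] at this
    exact this.mono_left nhdsWithin_le_nhds
  filter_upwards [hshift.eventually hunif, hpos] with h h1 h2
  rw [div_le_iff₀ h2, sub_le_iff_le_add', hφ (t + h)]
  refine csSup_le (Set.range_nonempty _) ?_
  rintro _ ⟨x, rfl⟩
  have := h1 x (Set.mem_univ x) (by linarith)
  simp only [add_sub_cancel_left] at this
  linarith
end

section
/- Let X be a nonempty compact topological space and let u : ℝ × X → ℝ be continuous and nonnegative. Assume that for every x ∈ X the function t ↦ u(t,x) is differentiable, that the partial derivative ∂ₜu : ℝ × X → ℝ is continuous, and let C ≥ 0 be a constant. Suppose that for every t ≥ 0 and every point x ∈ X at which y ↦ u(t,y) attains its maximum over X one has ∂ₜu(t,x) ≤ −u(t,x) + C·√(u(t,x)). Then for every t ≥ 0, max_{x ∈ X} u(t,x) ≤ max( max_{x ∈ X} u(0,x), C² ). -/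
/-!
The barrier `M = max (max u(0, ·)) C²` is never exceeded. If it were exceeded at time `t`, take a
maximum point `(s, y)` of `u` over the compact set `[0, t] × X`. Its value is greater than `M`, so
`s > 0`; `y` is a spatial maximum at time `s`, and `u(s, y) > C²` makes `-u + C√u` negative, hence
`∂ₜu(s, y) < 0`. But `u(·, y)` restricted to `[0, s]` is largest at the right endpoint `s`, which
forces `∂ₜu(s, y) ≥ 0` (`deriv_nonneg_of_max_right_endpoint`).
-/

open Filter Topology

theorem deriv_nonneg_of_max_right_endpoint {f : ℝ → ℝ} {f' a s : ℝ} (has : a < s)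
    (hf : HasDerivAt f f' s) (hmax : ∀ r ∈ Set.Icc a s, f r ≤ f s) : 0 ≤ f' := by
  have hlim : Tendsto (slope f s) (𝓝[<] s) (𝓝 f') :=
    (hasDerivAt_iff_tendsto_slope.1 hf).mono_left
      (nhdsWithin_mono s fun r hr => ne_of_lt hr)
  refine ge_of_tendsto hlim ?_
  filter_upwards [Ioo_mem_nhdsLT has] with r hr
  rw [slope_def_field]
  exact div_nonneg_of_nonpos (sub_nonpos.2 (hmax r ⟨hr.1.le, hr.2.le⟩)) (sub_nonpos.2 hr.2.le)

theorem neg_add_mul_sqrt_neg {C v : ℝ} (hv : C ^ 2 < v) :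
    -v + C * Real.sqrt v < 0 := by
  have hlt : C < Real.sqrt v := Real.lt_sqrt_of_sq_lt hv
  nlinarith [Real.sq_sqrt ((sq_nonneg C).trans hv.le)]

/-- Maximum-principle step: if the nonnegative continuous `u : ℝ × X → ℝ` (with `X`
compact nonempty) has continuous partial time derivative `du`, and at every spatial
maximum point (for `t ≥ 0`) one has `∂ₜu ≤ -u + C√u`, then for all `t ≥ 0` the spatial
maximum of `u (t, ·)` is at most `max (max_{x} u (0, x)) C²`. -/
theorem max_principle_sqrt {X : Type*} [TopologicalSpace X] [CompactSpace X] [Nonempty X]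
    (u du : ℝ × X → ℝ) (hu : Continuous u) (hnn : ∀ p : ℝ × X, 0 ≤ u p)
    (hdu : Continuous du)
    (hderiv : ∀ x : X, ∀ t : ℝ, HasDerivAt (fun s : ℝ => u (s, x)) (du (t, x)) t)
    (C : ℝ) (hC : 0 ≤ C)
    (hineq : ∀ t : ℝ, 0 ≤ t → ∀ x : X, (∀ y : X, u (t, y) ≤ u (t, x)) →
      du (t, x) ≤ -u (t, x) + C * Real.sqrt (u (t, x)))
    (t : ℝ) (ht : 0 ≤ t) :
    sSup (Set.range fun x : X => u (t, x))
      ≤ max (sSup (Set.range fun x : X => u (0, x))) (C ^ 2) := by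
  refine csSup_le (Set.range_nonempty _) ?_
  rintro _ ⟨x, rfl⟩
  by_contra! hlt
  have hbdd : BddAbove (Set.range fun x : X => u (0, x)) :=
    (isCompact_range (by fun_prop)).bddAbove
  obtain ⟨⟨s, y⟩, ⟨⟨hs0, hst⟩, -⟩, hmax⟩ :=
    ((isCompact_Icc (a := (0 : ℝ)) (b := t)).prod (isCompact_univ (X := X))).exists_isMaxOn
      ⟨(t, x), ⟨ht, le_rfl⟩, Set.mem_univ x⟩ hu.continuousOn
  have hle : ∀ r, 0 ≤ r → r ≤ t → ∀ z, u (r, z) ≤ u (s, y) := fun r h0 h1 z =>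
    hmax ⟨⟨h0, h1⟩, Set.mem_univ z⟩
  have hbig := hlt.trans_le (hle t ht le_rfl x)
  have hspos : 0 < s := by
    refine hs0.lt_of_ne ?_
    rintro rfl
    exact absurd ((le_csSup hbdd ⟨y, rfl⟩).trans (le_max_left _ _)) hbig.not_ge
  have hneg : du (s, y) < 0 :=
    (hineq s hs0 y (hle s hs0 hst)).trans_lt
      (neg_add_mul_sqrt_neg ((le_max_right _ _).trans_lt hbig))
  exact hneg.not_ge (deriv_nonneg_of_max_right_endpoint hspos (hderiv y s)
    fun r hr => hle r hr.1 (hr.2.trans hst) y)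
end

section
/- Let u : ℝ → ℝ be differentiable with u(t) ≥ 0 for all t ≥ 0, let α > 0 be a constant, and let g : ℝ → ℝ be a continuous function with g(t) ≥ 0 for all t ≥ 0 and g(t) → 0 as t → ∞. If u′(t) ≤ −α·u(t) + g(t)·√(u(t)) for all t ≥ 0, then u(t) → 0 as t → ∞. -/
open Filter Topology

/-!
The forcing is absorbed by the AM-GM inequality: once `g t ≤ α c`, one has
`g t √u ≤ α c √u ≤ (α/2) (c² + u)`, so `u' ≤ -(α/2) (u - c²)`. Hence `(u - c²) exp ((α/2) t)` is
eventually antitone, which forces `u` below every level exceeding `c²`. Since `c > 0` is arbitrary, `u → 0`.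
-/

/-- Grönwall-type bound: a linear decay inequality towards `b`, valid from time `T` on, brings `v`
below any level strictly above `b`. -/
lemma eventually_lt_of_deriv_le {v : ℝ → ℝ} (hv : Differentiable ℝ v) {k b d T : ℝ} (hk : 0 < k)
    (hbd : b < d) (h : ∀ t, T ≤ t → deriv v t ≤ -k * (v t - b)) :
    ∀ᶠ t in atTop, v t < d := by
  have hd : ∀ t, HasDerivAt (fun t => (v t - b) * Real.exp (k * t))
      (deriv v t * Real.exp (k * t) + (v t - b) * (Real.exp (k * t) * (k * 1))) t := fun t =>
    ((hv t).hasDerivAt.sub_const b).mul (((hasDerivAt_id t).const_mul k).exp)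
  have hanti : AntitoneOn (fun t => (v t - b) * Real.exp (k * t)) (Set.Ici T) := by
    apply antitoneOn_of_deriv_nonpos (convex_Ici T)
    · exact fun t _ => (hd t).continuousAt.continuousWithinAt
    · exact fun t _ => (hd t).differentiableAt.differentiableWithinAt
    · intro t ht
      rw [interior_Ici] at ht
      rw [(hd t).deriv]
      nlinarith [h t (le_of_lt ht), Real.exp_pos (k * t)]
  have hexp : Tendsto (fun t => (d - b) * Real.exp (k * t)) atTop atTop :=
    (Real.tendsto_exp_atTop.comp (tendsto_id.const_mul_atTop hk)).const_mul_atTop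
      (sub_pos.2 hbd)
  filter_upwards [eventually_ge_atTop T,
    hexp.eventually_gt_atTop ((v T - b) * Real.exp (k * T))] with t ht hlt
  have h1 : (v t - b) * Real.exp (k * t) ≤ (v T - b) * Real.exp (k * T) :=
    hanti Set.self_mem_Ici (Set.mem_Ici.2 ht) ht
  have h2 := lt_of_mul_lt_mul_right (h1.trans_lt hlt) (Real.exp_pos _).le
  linarith

/-- ODE lemma with decaying forcing: a nonnegative differentiable `u` with
`u' ≤ -αu + g(t)√u` on `[0, ∞)`, where `g` is continuous, nonnegative on `[0, ∞)` and
tends to `0` at infinity, tends to `0` at infinity. -/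
theorem ode_decaying_forcing (u : ℝ → ℝ) (hdiff : Differentiable ℝ u)
    (hnn : ∀ t : ℝ, 0 ≤ t → 0 ≤ u t) (α : ℝ) (hα : 0 < α)
    (g : ℝ → ℝ) (hg : Continuous g) (hgnn : ∀ t : ℝ, 0 ≤ t → 0 ≤ g t)
    (hg0 : Filter.Tendsto g Filter.atTop (nhds 0))
    (hineq : ∀ t : ℝ, 0 ≤ t → deriv u t ≤ -α * u t + g t * Real.sqrt (u t)) :
    Filter.Tendsto u Filter.atTop (nhds 0) := by
  refine tendsto_order.2 ⟨fun a ha => ?_, fun ε hε => ?_⟩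
  · filter_upwards [eventually_ge_atTop 0] with t ht
    exact ha.trans_le (hnn t ht)
  · obtain ⟨c, hc, hcε⟩ : ∃ c : ℝ, 0 < c ∧ c ^ 2 < ε :=
      ⟨√(ε / 2), Real.sqrt_pos.2 (half_pos hε), by
        rw [Real.sq_sqrt (half_pos hε).le]; exact half_lt_self hε⟩
    obtain ⟨T, hT⟩ := eventually_atTop.1
      ((eventually_ge_atTop 0).and (hg0.eventually (gt_mem_nhds (mul_pos hα hc))))
    refine eventually_lt_of_deriv_le hdiff (half_pos hα) hcε (T := T) fun t ht => ?_
    obtain ⟨ht0, hgt⟩ := hT t ht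
    have h1 := hineq t ht0
    have h2 : g t * √(u t) ≤ α * c * √(u t) :=
      mul_le_mul_of_nonneg_right hgt.le (Real.sqrt_nonneg _)
    have h3 := Real.sq_sqrt (hnn t ht0)
    have h4 := mul_nonneg hα.le (sq_nonneg (c - √(u t)))
    have h5 : α * (c - √(u t)) ^ 2 = α * c ^ 2 - 2 * (α * c * √(u t)) + α * u t := by
      rw [← h3, Real.sqrt_sq (Real.sqrt_nonneg _)]; ring
    linarith
end
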